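/- Let K ≥ 2, Σ ∈ ℰ, T = (T_1,…,T_n) ~ N(0,Σ), and D_i = g(T_i). Then for every arm k ∈ {1,…,K} and all i, j ∈ {1,…,n}, Cov(1{D_i = k}, 1{D_j = k}) = f_k(Σ_{ij}); that is, Cov_k(D) = f_k(Σ) with f_k applied entrywise. -/

import Mathlib

open MeasureTheory ProbabilityTheory Matrix Real
open scoped BigOperators ENNReal NNReal

noncomputable section

/-- Covariance of two real random variables on a measure space. -/
def cov {Ω : Type*} [MeasureSpace Ω] (U V : Ω → ℝ) : ℝ :=
  (∫ ω, U ω * V ω) - (∫ ω, U ω) * (∫ ω, V ω)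

/-- The standard normal CDF `Φ`. -/
def stdGaussianCDF (x : ℝ) : ℝ := (gaussianReal 0 1 (Set.Iic x)).toReal

/-- The set of values `t` mapped by the Gaussianization map `g` to arm `k`
(here arms are `0`-indexed: `k : Fin K` represents arm `k+1`, and `q m = Φ⁻¹(m/K)`):
arm `1` corresponds to `(−∞, q 1]`, arm `K` to `(q (K−1), ∞)`, and arm `a` with
`1 < a < K` to `(q (a−1), q a]`. Then `D_i = g(T_i)` iff `T_i ∈ armSet q K (D_i)`. -/
def armSet (q : ℕ → ℝ) (K : ℕ) (k : Fin K) : Set ℝ :=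
  if k.val = 0 then Set.Iic (q 1)
  else if k.val = K - 1 then Set.Ioi (q (K - 1))
  else Set.Ioc (q k.val) (q (k.val + 1))

/-- The function `r_{i,j}(ρ) = ∫₀^ρ (2π√(1−r²))⁻¹ exp(−(q_i²+q_j²−2 r q_i q_j)/(2(1−r²))) dr`. -/
def rfun (q : ℕ → ℝ) (i j : ℕ) (ρ : ℝ) : ℝ :=
  ∫ r in (0 : ℝ)..ρ,
    (2 * π * Real.sqrt (1 - r ^ 2))⁻¹ *
      Real.exp (-((q i ^ 2 + q j ^ 2 - 2 * r * q i * q j) / (2 * (1 - r ^ 2))))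

/-- The function `f_k` (arms `0`-indexed: `k : Fin K` represents arm `k+1`):
`f_1 = r_{1,1}`, `f_K = r_{K−1,K−1}`, and `f_a = r_{a−1,a−1} + r_{a,a} − 2 r_{a−1,a}`
for `1 < a < K`. -/
def fkfun (q : ℕ → ℝ) (K : ℕ) (k : Fin K) (ρ : ℝ) : ℝ :=
  if k.val = 0 then rfun q 1 1 ρ
  else if k.val = K - 1 then rfun q (K - 1) (K - 1) ρ
  else rfun q k.val k.val ρ + rfun q (k.val + 1) (k.val + 1) ρ
    - 2 * rfun q k.val (k.val + 1) ρ

/-- The bivariate density along the segment. -/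
def hbiv (a b r : ℝ) : ℝ := (2 * π * Real.sqrt (1 - r ^ 2))⁻¹ *
      Real.exp (-((a ^ 2 + b ^ 2 - 2 * r * a * b) / (2 * (1 - r ^ 2))))

/-- The bivariate distribution function. -/
def Gbiv (a b r : ℝ) : ℝ := ((gaussianReal 0 1).prod (gaussianReal 0 1)).real
  {p : ℝ × ℝ | p.1 ≤ a ∧ r * p.1 + Real.sqrt (1 - r ^ 2) * p.2 ≤ b}

lemma Phi_eq (x : ℝ) : stdGaussianCDF x = ∫ t in Set.Iic x, gaussianPDFReal 0 1 t := by
  unfold stdGaussianCDF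
  rw [gaussianReal_apply_eq_integral 0 one_ne_zero, ENNReal.toReal_ofReal]
  exact integral_nonneg fun _ => gaussianPDFReal_nonneg _ _ _

lemma cont_pdf : Continuous (gaussianPDFReal 0 1) := by
  unfold gaussianPDFReal; fun_prop

lemma Phi_deriv (x : ℝ) : HasDerivAt stdGaussianCDF (gaussianPDFReal 0 1 x) x := by
  have hI : ∀ s : Set ℝ, IntegrableOn (gaussianPDFReal 0 1) s := fun s =>
    (integrable_gaussianPDFReal 0 1).integrableOn
  have : stdGaussianCDF = fun y => stdGaussianCDF 0 + ∫ t in (0:ℝ)..y, gaussianPDFReal 0 1 t := by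
    ext y
    rw [Phi_eq, Phi_eq, ← intervalIntegral.integral_Iic_sub_Iic (hI _) (hI _)]
    ring
  rw [this]
  apply HasDerivAt.const_add
  exact intervalIntegral.integral_hasDerivAt_right (cont_pdf.intervalIntegrable _ _)
    cont_pdf.stronglyMeasurable.stronglyMeasurableAtFilter cont_pdf.continuousAt

lemma Phi_cont : Continuous stdGaussianCDF :=
  continuous_iff_continuousAt.2 fun x => (Phi_deriv x).continuousAt

lemma Phi_bdd (x : ℝ) : ‖stdGaussianCDF x‖ ≤ 1 := by
  unfold stdGaussianCDF
  rw [Real.norm_of_nonneg ENNReal.toReal_nonneg]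
  exact measureReal_le_one

lemma msset (a b r s : ℝ) : MeasurableSet {p : ℝ × ℝ | p.1 ≤ a ∧ r * p.1 + s * p.2 ≤ b} := by
  have h1 : MeasurableSet {p : ℝ × ℝ | p.1 ≤ a} := measurableSet_le (by fun_prop) (by fun_prop)
  have h2 : MeasurableSet {p : ℝ × ℝ | r * p.1 + s * p.2 ≤ b} :=
    measurableSet_le (by fun_prop) (by fun_prop)
  exact h1.inter h2

lemma G_eq (a b r : ℝ) (hr : r ∈ Set.Ioo (-1:ℝ) 1) :
    Gbiv a b r = ∫ x in Set.Iic a, stdGaussianCDF ((b - r * x) / Real.sqrt (1 - r ^ 2))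
      ∂(gaussianReal 0 1) := by
  have hs : 0 < Real.sqrt (1 - r ^ 2) := Real.sqrt_pos.2 (by nlinarith [hr.1, hr.2])
  unfold Gbiv
  rw [measureReal_def, Measure.prod_apply (msset _ _ _ _), ← integral_indicator measurableSet_Iic,
    ← integral_toReal]
  · congr 1
    ext x
    by_cases hx : x ≤ a
    · rw [Set.indicator_of_mem (by exact hx)]
      unfold stdGaussianCDF
      congr 2
      ext y
      simp only [Set.mem_preimage, Set.mem_ofPred_eq, hx, true_and, Set.mem_Iic]
      rw [le_div_iff₀ hs]
      constructor <;> intro h <;> linarith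
    · rw [Set.indicator_of_notMem (by exact hx)]
      have : (Prod.mk x ⁻¹' {p : ℝ × ℝ | p.1 ≤ a ∧ r * p.1 + √(1 - r ^ 2) * p.2 ≤ b}) = ∅ := by
        ext y; simp [hx]
      simp [this]
  · exact (measurable_measure_prodMk_left (msset _ _ _ _)).aemeasurable
  · exact Filter.Eventually.of_forall fun x => measure_lt_top _ _

lemma pdf_mul (x b r : ℝ) (hr : r ∈ Set.Ioo (-1:ℝ) 1) :
    gaussianPDFReal 0 1 x * gaussianPDFReal 0 1 ((b - r * x) / Real.sqrt (1 - r ^ 2)) 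
     = Real.sqrt (1 - r ^ 2) * hbiv x b r := by
  have h1 : 0 < 1 - r ^ 2 := by nlinarith [hr.1, hr.2]
  have hs : 0 < Real.sqrt (1 - r ^ 2) := Real.sqrt_pos.2 h1
  have hpi : √(2 * π) * √(2 * π) = 2 * π := Real.mul_self_sqrt (by positivity)
  unfold gaussianPDFReal hbiv
  have e : ∀ u v w z : ℝ, u⁻¹ * v * (w⁻¹ * z) = (u * w)⁻¹ * (v * z) := by
    intros; rw [mul_inv]; ring
  simp only [NNReal.coe_one, mul_one, sub_zero]
  rw [e, hpi, ← Real.exp_add, div_pow, Real.sq_sqrt h1.le]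
  rw [show -x ^ 2 / 2 + -((b - r * x) ^ 2 / (1 - r ^ 2)) / 2
    = -((x ^ 2 + b ^ 2 - 2 * r * x * b) / (2 * (1 - r ^ 2))) by field_simp; ring]
  field_simp

lemma u_deriv (x b r : ℝ) (hr : r ∈ Set.Ioo (-1:ℝ) 1) :
    HasDerivAt (fun r => (b - r * x) / Real.sqrt (1 - r ^ 2))
      ((r * b - x) / Real.sqrt (1 - r ^ 2) ^ 3) r := by
  have h1 : 0 < 1 - r ^ 2 := by nlinarith [hr.1, hr.2]
  have hs : 0 < Real.sqrt (1 - r ^ 2) := Real.sqrt_pos.2 h1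
  have hss := Real.sq_sqrt h1.le
  have hd : HasDerivAt (fun r : ℝ => 1 - r ^ 2) (-(2 * r)) r := by
    simpa using (hasDerivAt_pow 2 r).const_sub 1
  have hn : HasDerivAt (fun r : ℝ => b - r * x) (-x) r := by
    simpa using ((hasDerivAt_id r).mul_const x).const_sub b
  refine (hn.div (hd.sqrt h1.ne') hs.ne').congr_deriv ?_
  field_simp
  rw [hss]; ring

lemma h_deriv (x b r : ℝ) (hr : r ∈ Set.Ioo (-1:ℝ) 1) :
    HasDerivAt (fun x => hbiv x b r) (gaussianPDFReal 0 1 x * 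
      (gaussianPDFReal 0 1 ((b - r * x) / Real.sqrt (1 - r ^ 2)) *
      ((r * b - x) / Real.sqrt (1 - r ^ 2) ^ 3))) x := by
  have h1 : 0 < 1 - r ^ 2 := by nlinarith [hr.1, hr.2]
  have hs : 0 < Real.sqrt (1 - r ^ 2) := Real.sqrt_pos.2 h1
  have hss := Real.sq_sqrt h1.le
  have hd : HasDerivAt (fun x : ℝ => -((x ^ 2 + b ^ 2 - 2 * r * x * b) / (2 * (1 - r ^ 2))))
      (-((2 * x - 2 * r * b) / (2 * (1 - r ^ 2)))) x := by
    have := ((((hasDerivAt_pow 2 x).add_const (b^2)).sub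
      (((hasDerivAt_id x).const_mul (2*r)).mul_const b)).div_const (2 * (1 - r ^ 2))).neg
    simpa using! this
  rw [← mul_assoc, pdf_mul x b r hr]
  have := hd.exp.const_mul ((2 * π * Real.sqrt (1 - r ^ 2))⁻¹)
  unfold hbiv
  refine this.congr_deriv ?_
  rw [show √(1 - r ^ 2) ^ 3 = √(1 - r ^ 2) * (1 - r^2) by rw [pow_succ, hss]; ring]
  field_simp
  ring

lemma pdf_le_one (x : ℝ) : gaussianPDFReal 0 1 x ≤ 1 := by
  unfold gaussianPDFReal
  have h1 : (1:ℝ) ≤ √(2 * π * (1:ℝ≥0)) := by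
    rw [Real.one_le_sqrt]; simp; nlinarith [Real.pi_gt_three]
  have h2 : rexp (-(x - 0) ^ 2 / (2 * (1:ℝ≥0))) ≤ 1 := by
    rw [Real.exp_le_one_iff, neg_div, neg_nonpos]; positivity
  exact mul_le_one₀ (inv_le_one_of_one_le₀ h1) (Real.exp_pos _).le h2

lemma pdf_tendsto : Filter.Tendsto (gaussianPDFReal 0 1) Filter.atBot (nhds 0) := by
  unfold gaussianPDFReal
  rw [← mul_zero (√(2 * π * (1:ℝ≥0)))⁻¹]
  apply Filter.Tendsto.const_mul
  apply Real.tendsto_exp_atBot.comp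
  have : Filter.Tendsto (fun x : ℝ => x ^ 2) Filter.atBot Filter.atTop := by
    have := (Filter.tendsto_pow_atTop (α := ℝ) (two_ne_zero)).comp Filter.tendsto_neg_atBot_atTop
    refine this.congr fun x => by simp
  have := Filter.tendsto_neg_atTop_atBot.comp (this.atTop_div_const (show (0:ℝ) < 2 by norm_num))
  refine this.congr fun x => by simp [neg_div]

lemma pdf_abs_int : Integrable (fun x : ℝ => gaussianPDFReal 0 1 x * |x|) := by
  have := (integrable_mul_exp_neg_mul_sq (b := 1/2) (by norm_num)).norm.const_mul (√(2 * π))⁻¹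
  refine this.congr (Filter.Eventually.of_forall fun x => ?_)
  simp only [gaussianPDFReal, norm_mul, Real.norm_eq_abs, Real.abs_exp, NNReal.coe_one, mul_one, sub_zero]
  rw [show -(1/2) * x ^ 2 = -x^2/2 by ring]; ring

lemma h_tendsto (b r : ℝ) (hr : r ∈ Set.Ioo (-1:ℝ) 1) :
    Filter.Tendsto (fun x => hbiv x b r) Filter.atBot (nhds 0) := by
  have h1 : 0 < 1 - r ^ 2 := by nlinarith [hr.1, hr.2]
  have hs : 0 < Real.sqrt (1 - r ^ 2) := Real.sqrt_pos.2 h1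
  have h := pdf_tendsto.const_mul ((Real.sqrt (1 - r ^ 2))⁻¹)
  rw [mul_zero] at h
  refine squeeze_zero (fun x => ?_) (fun x => ?_) h
  · unfold hbiv; positivity
  · have := pdf_mul x b r hr
    rw [inv_mul_eq_div, le_div_iff₀ hs, mul_comm, ← this]
    exact mul_le_of_le_one_right (gaussianPDFReal_nonneg _ _ _) (pdf_le_one _)

lemma G_eq' (a b r : ℝ) (hr : r ∈ Set.Ioo (-1:ℝ) 1) :
    Gbiv a b r = ∫ x in Set.Iic a, gaussianPDFReal 0 1 x *
      stdGaussianCDF ((b - r * x) / Real.sqrt (1 - r ^ 2)) := by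
  rw [G_eq a b r hr, ← integral_indicator measurableSet_Iic,
    integral_gaussianReal_eq_integral_smul one_ne_zero, ← integral_indicator measurableSet_Iic]
  congr 1; ext x
  by_cases hx : x ∈ Set.Iic a <;> simp [hx]

lemma G_deriv (a b r : ℝ) (hr : r ∈ Set.Ioo (-1:ℝ) 1) :
    HasDerivAt (Gbiv a b) (hbiv a b r) r := by
  obtain ⟨c, hc, hc1⟩ : ∃ c, |r| < c ∧ c < 1 := exists_between (abs_lt.2 ⟨hr.1, hr.2⟩)
  have hc0 : 0 < c := (abs_nonneg r).trans_lt hc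
  have hrc := abs_lt.1 hc
  have hsub : Set.Ioo (-c) c ⊆ Set.Ioo (-1:ℝ) 1 := Set.Ioo_subset_Ioo (by linarith) hc1.le
  have hcc : 0 < 1 - c ^ 2 := by nlinarith
  have hcs := Real.sqrt_pos.2 hcc
  have key := hasDerivAt_integral_of_dominated_loc_of_deriv_le (μ := volume.restrict (Set.Iic a))
    (F := fun r x => gaussianPDFReal 0 1 x *
      stdGaussianCDF ((b - r * x) / Real.sqrt (1 - r ^ 2)))
    (F' := fun r x => gaussianPDFReal 0 1 x * 
      (gaussianPDFReal 0 1 ((b - r * x) / Real.sqrt (1 - r ^ 2)) *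
      ((r * b - x) / Real.sqrt (1 - r ^ 2) ^ 3)))
    (bound := fun x => (gaussianPDFReal 0 1 x * |b| + gaussianPDFReal 0 1 x * |x|) * 
      (√(1 - c^2) ^ 3)⁻¹)
    (x₀ := r) (s := Set.Ioo (-c) c) (Ioo_mem_nhds hrc.1 hrc.2) ?_ ?_ ?_ ?_ ?_ ?_
  · obtain ⟨k1, k2⟩ := key
    have e : ∫ x in Set.Iic a, gaussianPDFReal 0 1 x * 
      (gaussianPDFReal 0 1 ((b - r * x) / Real.sqrt (1 - r ^ 2)) *
      ((r * b - x) / Real.sqrt (1 - r ^ 2) ^ 3)) = hbiv a b r - 0 :=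
      integral_Iic_of_hasDerivAt_of_tendsto' (f := fun x => hbiv x b r)
        (fun x _ => h_deriv x b r hr) k1 (h_tendsto b r hr)
    rw [e, sub_zero] at k2
    refine k2.congr_of_eventuallyEq ?_
    filter_upwards [Ioo_mem_nhds hr.1 hr.2] with y hy
    exact G_eq' a b y hy
  · refine Filter.Eventually.of_forall fun y => ?_
    have := cont_pdf
    have := Phi_cont
    exact Continuous.aestronglyMeasurable (by fun_prop)
  · have := cont_pdf
    have := Phi_cont
    refine ((integrable_gaussianPDFReal 0 1).mono' 
      (Continuous.aestronglyMeasurable (by fun_prop)) ?_).restrict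
    refine Filter.Eventually.of_forall fun x => ?_
    rw [norm_mul, Real.norm_of_nonneg (gaussianPDFReal_nonneg _ _ _)]
    exact mul_le_of_le_one_right (gaussianPDFReal_nonneg _ _ _) (Phi_bdd _)
  · have := cont_pdf
    exact Continuous.aestronglyMeasurable (by fun_prop)
  · refine Filter.Eventually.of_forall fun x y hy => ?_
    have hy1 := hsub hy
    have h1 : 0 < 1 - y ^ 2 := by nlinarith [hy1.1, hy1.2]
    have hs : 0 < Real.sqrt (1 - y ^ 2) := Real.sqrt_pos.2 h1
    have hle : √(1 - c^2) ≤ √(1 - y^2) := Real.sqrt_le_sqrt (by nlinarith [hy.1, hy.2])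
    have hp := gaussianPDFReal_nonneg 0 1 x
    rw [norm_mul, norm_mul, Real.norm_of_nonneg hp,
      Real.norm_of_nonneg (gaussianPDFReal_nonneg _ _ _), norm_div, norm_pow,
      Real.norm_of_nonneg hs.le, ← mul_add, mul_assoc]
    refine mul_le_mul_of_nonneg_left ?_ hp
    refine (mul_le_of_le_one_left (by positivity) (pdf_le_one _)).trans ?_
    rw [div_eq_mul_inv]
    have : ‖y * b - x‖ ≤ |b| + |x| := by
      refine (norm_sub_le _ _).trans ?_
      rw [norm_mul]
      simp only [Real.norm_eq_abs]
      have : |y| ≤ 1 := abs_le.2 ⟨hy1.1.le, hy1.2.le⟩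
      nlinarith [abs_nonneg b]
    gcongr
  · exact (((integrable_gaussianPDFReal 0 1).mul_const _).add pdf_abs_int).mul_const _ |>.restrict
  · refine Filter.Eventually.of_forall fun x y hy => ?_
    exact ((Phi_deriv _).comp y (u_deriv x b y (hsub hy))).const_mul _

/-- charFun of the standard Gaussian as an explicit integral -/
lemma cf (t : ℝ) : ∫ x, Complex.exp ((t * x : ℝ) * Complex.I) ∂(gaussianReal 0 1)
    = Complex.exp (-(t:ℂ) ^ 2 / 2) := by
  have := charFun_gaussianReal (μ := 0) (v := 1) t
  rw [charFun_apply_real] at this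
  simp at this
  push_cast
  rw [this]; ring_nf

lemma law_eq (n : ℕ) (u v : Fin n → ℝ) (ρ : ℝ) (hu : ∑ k, u k * u k = 1) (hv : ∑ k, v k * v k = 1)
    (huv : ∑ k, u k * v k = ρ) (hρ : ρ ^ 2 ≤ 1) :
    (Measure.pi fun _ : Fin n => gaussianReal 0 1).map (fun z => (∑ k, u k * z k, ∑ k, v k * z k))
    = ((gaussianReal 0 1).prod (gaussianReal 0 1)).map
      (fun p => (p.1, ρ * p.1 + √(1 - ρ ^ 2) * p.2)) := by
  have m1 : Measurable (fun z : Fin n → ℝ => (∑ k, u k * z k, ∑ k, v k * z k)) := by fun_prop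
  have m2 : Measurable (fun p : ℝ × ℝ => (p.1, ρ * p.1 + √(1 - ρ ^ 2) * p.2)) := by fun_prop
  have := Measure.isFiniteMeasure_map (Measure.pi fun _ : Fin n => gaussianReal 0 1) 
    (fun z => (∑ k, u k * z k, ∑ k, v k * z k))
  have := Measure.isFiniteMeasure_map ((gaussianReal 0 1).prod (gaussianReal 0 1))
      (fun p => (p.1, ρ * p.1 + √(1 - ρ ^ 2) * p.2))
  apply Measure.ext_of_charFunDual
  ext L
  have hL : ∀ x y : ℝ, L (x, y) = L (1, 0) * x + L (0, 1) * y := by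
    intro x y
    have : (x, y) = x • ((1:ℝ), (0:ℝ)) + y • ((0:ℝ), (1:ℝ)) := by simp
    rw [this, map_add, map_smul, map_smul]; simp [mul_comm]
  generalize L (1, 0) = α at hL
  generalize L (0, 1) = β at hL
  rw [charFunDual_apply, charFunDual_apply, integral_map m1.aemeasurable (by fun_prop),
    integral_map m2.aemeasurable (by fun_prop)]
  simp only [hL]
  have e1 : ∀ z : Fin n → ℝ, Complex.exp (((α * ∑ k, u k * z k + β * ∑ k, v k * z k : ℝ)) * Complex.I)
      = ∏ k, Complex.exp (((α * u k + β * v k) * z k : ℝ) * Complex.I) := by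
    intro z
    rw [← Complex.exp_sum, ← Finset.sum_mul, ← Complex.ofReal_sum, Finset.mul_sum, Finset.mul_sum,
      ← Finset.sum_add_distrib]
    congr 4; ext k; ring
  have e2 : ∀ p : ℝ × ℝ, Complex.exp (((α * p.1 + β * (ρ * p.1 + √(1 - ρ ^ 2) * p.2) : ℝ)) * Complex.I)
      = Complex.exp (((α + β * ρ) * p.1 : ℝ) * Complex.I) *
        Complex.exp (((β * √(1 - ρ ^ 2)) * p.2 : ℝ) * Complex.I) := by
    intro p
    rw [← Complex.exp_add]; congr 1; push_cast; ring
  simp only [e1, e2]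
  rw [integral_fintype_prod_eq_prod (fun k (x:ℝ) => Complex.exp (((α * u k + β * v k) * x : ℝ) * Complex.I)),
    integral_prod_mul (fun x : ℝ => Complex.exp (((α + β * ρ) * x : ℝ) * Complex.I))
      (fun x : ℝ => Complex.exp (((β * √(1 - ρ ^ 2)) * x : ℝ) * Complex.I))]
  simp only [cf]
  rw [← Complex.exp_sum, ← Complex.exp_add]
  congr 1
  have hs := Real.sq_sqrt (show 0 ≤ 1 - ρ ^ 2 by linarith)
  have : ∑ k, -(α * u k + β * v k) ^ 2 / 2 
     = -(α + β * ρ) ^ 2 / 2 + -(β * √(1 - ρ ^ 2)) ^ 2 / 2 := by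
    have : ∀ k, -(α * u k + β * v k) ^ 2 / 2 = (-α^2/2) * (u k * u k) + (-β^2/2) * (v k * v k) 
      + (- (α * β)) * (u k * v k) := by intro k; ring
    simp only [this, Finset.sum_add_distrib, ← Finset.mul_sum]
    rw [hu, hv, huv, mul_pow, hs]; ring
  exact_mod_cast congrArg (fun x : ℝ => (x : ℂ)) this

lemma law_lin (ρ : ℝ) (hρ : ρ ^ 2 ≤ 1) :
    ((gaussianReal 0 1).prod (gaussianReal 0 1)).map
      (fun p : ℝ × ℝ => ρ * p.1 + √(1 - ρ ^ 2) * p.2) = gaussianReal 0 1 := by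
  apply Measure.ext_of_charFun
  ext t
  rw [charFun_apply_real, charFun_gaussianReal, integral_map (by fun_prop) (by fun_prop)]
  have e2 : ∀ p : ℝ × ℝ, Complex.exp (t * ((ρ * p.1 + √(1 - ρ ^ 2) * p.2 : ℝ)) * Complex.I)
      = Complex.exp (((t * ρ) * p.1 : ℝ) * Complex.I) *
        Complex.exp (((t * √(1 - ρ ^ 2)) * p.2 : ℝ) * Complex.I) := by
    intro p
    rw [← Complex.exp_add]; congr 1; push_cast; ring
  simp only [e2]
  rw [integral_prod_mul (fun x : ℝ => Complex.exp (((t * ρ) * x : ℝ) * Complex.I))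
      (fun x : ℝ => Complex.exp (((t * √(1 - ρ ^ 2)) * x : ℝ) * Complex.I))]
  simp only [cf]
  rw [← Complex.exp_add]
  congr 1
  have hs := Real.sq_sqrt (show 0 ≤ 1 - ρ ^ 2 by linarith)
  have : -(t * ρ) ^ 2 / 2 + -(t * √(1 - ρ ^ 2)) ^ 2 / 2 = - t ^ 2 / 2 := by
    rw [mul_pow _ √(1 - ρ ^ 2), hs]; ring
  have h2 := congrArg (fun x : ℝ => (x : ℂ)) this
  push_cast at h2 ⊢
  rw [h2]; simp; ring

lemma G_cont (a b : ℝ) : ContinuousOn (Gbiv a b) (Set.Icc (-1) 1) := by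
  intro r hr
  have hr2 : r ^ 2 ≤ 1 := by nlinarith [hr.1, hr.2]
  apply ContinuousAt.continuousWithinAt
  have : Gbiv a b = fun r => ∫ p : ℝ × ℝ, ({p : ℝ × ℝ | p.1 ≤ a ∧ r * p.1 + √(1 - r ^ 2) * p.2 ≤ b}.indicator 
      (fun _ => (1:ℝ)) p) ∂((gaussianReal 0 1).prod (gaussianReal 0 1)) := by
    ext r
    rw [integral_indicator_const _ (msset _ _ _ _)]
    simp [Gbiv]
  rw [this]
  apply continuousAt_of_dominated (bound := fun _ => 1)
  · refine Filter.Eventually.of_forall fun y => ?_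
    exact (measurable_const.indicator (msset _ _ _ _)).aestronglyMeasurable
  · refine Filter.Eventually.of_forall fun y => Filter.Eventually.of_forall fun p => ?_
    refine (norm_indicator_le_norm_self _ _).trans (by simp)
  · exact integrable_const _
  · have hn : ∀ᵐ p ∂((gaussianReal 0 1).prod (gaussianReal 0 1)), 
        r * p.1 + √(1 - r ^ 2) * p.2 ≠ b := by
      have := nullSingletonClass_gaussianReal (μ := 0) (v := 1) one_ne_zero
      have h0 : ∀ᵐ x ∂(gaussianReal 0 1), x ≠ b := by
        rw [ae_iff]; simp
      rw [← law_lin r hr2] at h0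
      exact ae_of_ae_map (f := fun p : ℝ × ℝ => r * p.1 + √(1 - r ^ 2) * p.2) (by fun_prop) h0
    filter_upwards [hn] with p hp
    have hc : Continuous (fun r : ℝ => r * p.1 + √(1 - r ^ 2) * p.2) := by fun_prop
    rcases lt_or_gt_of_ne hp with h | h
    · have := hc.continuousAt.eventually_lt (continuousAt_const (y := b)) h
      refine ContinuousAt.congr (f := fun _ => if p.1 ≤ a then (1:ℝ) else 0) continuousAt_const ?_
      filter_upwards [this] with y hy
      simp [Set.indicator_apply, hy.le]
    · have := (continuousAt_const (y := b)).eventually_lt hc.continuousAt h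
      refine ContinuousAt.congr (f := fun _ => (0:ℝ)) continuousAt_const ?_
      filter_upwards [this] with y hy
      simp [Set.indicator_apply, not_le.2 hy]

lemma G_zero (a b : ℝ) : Gbiv a b 0 = stdGaussianCDF a * stdGaussianCDF b := by
  rw [G_eq a b 0 (by norm_num)]
  simp [stdGaussianCDF, measureReal_def]

lemma h_nonneg (a b r : ℝ) : 0 ≤ hbiv a b r := by
  unfold hbiv; positivity

lemma G_sub (a b ρ : ℝ) (hρ : ρ ∈ Set.Icc (-1:ℝ) 1) :
    Gbiv a b ρ = stdGaussianCDF a * stdGaussianCDF b + ∫ r in (0:ℝ)..ρ, hbiv a b r := by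
  rw [← G_zero]
  have h0 : (0:ℝ) ∈ Set.Icc (-1:ℝ) 1 := by norm_num
  have hsub : Set.uIcc 0 ρ ⊆ Set.Icc (-1:ℝ) 1 := Set.uIcc_subset_Icc h0 hρ
  have hsub2 : Set.Ioo (min 0 ρ) (max 0 ρ) ⊆ Set.Ioo (-1:ℝ) 1 := 
    Set.Ioo_subset_Ioo (le_min h0.1 hρ.1) (max_le h0.2 hρ.2)
  have hc := (G_cont a b).mono hsub
  have hd : ∀ x ∈ Set.Ioo (min 0 ρ) (max 0 ρ), HasDerivAt (Gbiv a b) (hbiv a b x) x :=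
    fun x hx => G_deriv a b x (hsub2 hx)
  have hi := intervalIntegral.intervalIntegrable_deriv_of_nonneg hc hd (fun x _ => h_nonneg a b x)
  have := intervalIntegral.integral_eq_sub_of_hasDeriv_right hc
    (fun x hx => (hd x hx).hasDerivWithinAt) hi
  rw [this]; ring

/-- Let `K ≥ 2`, `Σ` in the correlation elliptope, `T ~ N(0, Σ)` and
`D_i = g(T_i)`. Then for every arm `k` and all `i, j`,
`Cov(1{D_i = k}, 1{D_j = k}) = f_k(Σ_{ij})`, i.e. `Cov_k(D) = f_k(Σ)` entrywise.
The Gaussian law `N(0, Σ)` is expressed as the pushforward of an i.i.d. standard Gaussian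
vector by any matrix `A` with `A Aᵀ = Σ`. -/
theorem gaussianized_cov_eq_fk
    {Ω : Type*} [MeasureSpace Ω] [IsProbabilityMeasure (volume : Measure Ω)]
    (n K : ℕ) (hK : 2 ≤ K)
    (q : ℕ → ℝ) (hq : ∀ m : ℕ, 0 < m → m < K → stdGaussianCDF (q m) = (m : ℝ) / K)
    (S : Matrix (Fin n) (Fin n) ℝ) (hSpsd : S.PosSemidef) (hSdiag : ∀ i, S i i = 1)
    (A : Matrix (Fin n) (Fin n) ℝ) (hA : A * Aᵀ = S)
    (T : Ω → Fin n → ℝ) (hT : Measurable T)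
    (hTlaw : Measure.map T volume =
      Measure.map (fun z => A *ᵥ z) (Measure.pi fun _ : Fin n => gaussianReal 0 1))
    (D : Ω → Fin n → Fin K)
    (hD : ∀ ω i (k : Fin K), D ω i = k ↔ T ω i ∈ armSet q K k) :
    ∀ (k : Fin K) (i j : Fin n),
      cov (fun ω => if D ω i = k then (1 : ℝ) else 0)
          (fun ω => if D ω j = k then (1 : ℝ) else 0) = fkfun q K k (S i j) := by
  classical
  have hrow : ∀ i j, ∑ k, A i k * A j k = S i j := by
    intro i j
    rw [← hA, Matrix.mul_apply]; rfl
  have hS1 : ∀ i j, S i j ∈ Set.Icc (-1:ℝ) 1 := by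
    intro i j
    have h := Finset.sum_mul_sq_le_sq_mul_sq Finset.univ (A i) (A j)
    have h1 : ∀ i, ∑ k, A i k ^ 2 = 1 := by
      intro i; rw [← hSdiag i, ← hrow i i]; simp only [sq]
    rw [hrow, h1, h1] at h
    exact abs_le.1 (by rw [← sq_le_one_iff_abs_le_one]; linarith)
  have hlaw : ∀ i j, Measure.map (fun ω => (T ω i, T ω j)) volume =
      ((gaussianReal 0 1).prod (gaussianReal 0 1)).map
      (fun p => (p.1, S i j * p.1 + √(1 - S i j ^ 2) * p.2)) := by
    intro i j
    have e1 : Measure.map (fun ω => (T ω i, T ω j)) volume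
        = Measure.map (fun t : Fin n → ℝ => (t i, t j)) (Measure.map T volume) := by
      rw [Measure.map_map (by fun_prop) hT]; rfl
    have hmA : Measurable (fun z : Fin n → ℝ => A *ᵥ z) := by
      unfold Matrix.mulVec dotProduct; fun_prop
    rw [e1, hTlaw, Measure.map_map (by fun_prop) hmA, ← law_eq n (A i) (A j) (S i j)
      (by rw [hrow, hSdiag]) (by rw [hrow, hSdiag]) (hrow i j)
      (by nlinarith [(hS1 i j).1, (hS1 i j).2])]
    rfl
  have hTi : ∀ i, Measurable fun ω => T ω i := fun i => (measurable_pi_apply i).comp hT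
  have hmeas : ∀ i a, MeasurableSet {ω | T ω i ≤ a} := fun i a =>
    measurableSet_le (hTi i) measurable_const
  have hInt : ∀ i a, Integrable (fun ω => if T ω i ≤ a then (1:ℝ) else 0) := by
    intro i a
    have := (integrable_const (μ := (volume : Measure Ω)) (1:ℝ)).indicator (hmeas i a)
    refine this.congr (Filter.Eventually.of_forall fun ω => ?_)
    simp [Set.indicator_apply]
  have hInt2 : ∀ i a j b, Integrable (fun ω => (if T ω i ≤ a then (1:ℝ) else 0) *
      (if T ω j ≤ b then (1:ℝ) else 0)) := by
    intro i a j b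
    have := (integrable_const (μ := (volume : Measure Ω)) (1:ℝ)).indicator
      ((hmeas i a).inter (hmeas j b))
    refine this.congr (Filter.Eventually.of_forall fun ω => ?_)
    simp only [Set.indicator_apply, Set.mem_inter_iff, Set.mem_ofPred_eq, ite_and]
    split_ifs <;> simp
  have hEE : ∀ i a j b, ∫ ω, (if T ω i ≤ a then (1:ℝ) else 0) * (if T ω j ≤ b then (1:ℝ) else 0)
      = stdGaussianCDF a * stdGaussianCDF b + ∫ r in (0:ℝ)..S i j, hbiv a b r := by
    intro i a j b
    rw [← G_sub a b _ (hS1 i j)]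
    have hm : MeasurableSet (Set.Iic a ×ˢ Set.Iic b) := measurableSet_Iic.prod measurableSet_Iic
    have h := congrArg (fun μ : Measure (ℝ × ℝ) => μ.real (Set.Iic a ×ˢ Set.Iic b)) (hlaw i j)
    beta_reduce at h
    rw [map_measureReal_apply ((hTi i).prodMk (hTi j)) hm,
      map_measureReal_apply (by fun_prop) hm] at h
    have e : (fun ω => (if T ω i ≤ a then (1:ℝ) else 0) * (if T ω j ≤ b then (1:ℝ) else 0))
      = ((fun ω => (T ω i, T ω j)) ⁻¹' (Set.Iic a ×ˢ Set.Iic b)).indicator (fun _ => (1:ℝ)) := by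
      ext ω
      simp only [Set.indicator_apply, Set.mem_preimage, Set.mem_prod, Set.mem_Iic, ite_and]
      split_ifs <;> simp
    rw [e, integral_indicator_const _ (((hTi i).prodMk (hTi j)) hm), smul_eq_mul, mul_one, h]
    rfl
  have hE : ∀ i a, ∫ ω, (if T ω i ≤ a then (1:ℝ) else 0) = stdGaussianCDF a := by
    intro i a
    have hm : MeasurableSet (Set.Iic a ×ˢ (Set.univ : Set ℝ)) :=
      measurableSet_Iic.prod MeasurableSet.univ
    have h := congrArg (fun μ : Measure (ℝ × ℝ) => μ.real (Set.Iic a ×ˢ Set.univ)) (hlaw i i)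
    beta_reduce at h
    rw [map_measureReal_apply ((hTi i).prodMk (hTi i)) hm,
      map_measureReal_apply (by fun_prop) hm] at h
    have e : (fun ω => (if T ω i ≤ a then (1:ℝ) else 0))
      = ((fun ω => (T ω i, T ω i)) ⁻¹' (Set.Iic a ×ˢ Set.univ)).indicator (fun _ => (1:ℝ)) := by
      ext ω
      simp [Set.indicator_apply]
    rw [e, integral_indicator_const _ (((hTi i).prodMk (hTi i)) hm), smul_eq_mul, mul_one, h]
    have e2 : (fun p : ℝ × ℝ => (p.1, S i i * p.1 + √(1 - S i i ^ 2) * p.2)) ⁻¹'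
      (Set.Iic a ×ˢ Set.univ) = Set.Iic a ×ˢ Set.univ := by ext p; simp
    rw [e2, measureReal_prod_prod]
    simp [stdGaussianCDF, measureReal_def]
  have hsymm : ∀ a b r, hbiv a b r = hbiv b a r := by
    intro a b r; unfold hbiv
    rw [show a ^ 2 + b ^ 2 - 2 * r * a * b = b ^ 2 + a ^ 2 - 2 * r * b * a by ring]
  intro k i j
  have hr : ∀ l m, rfun q l m (S i j) = ∫ r in (0:ℝ)..S i j, hbiv (q l) (q m) r := fun l m => rfl
  unfold cov fkfun
  simp only [hD, hr]
  unfold armSet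
  by_cases hk0 : k.val = 0
  · simp only [hk0, if_true, Set.mem_Iic]
    rw [hEE, hE, hE]; ring
  by_cases hk1 : k.val = K - 1
  · simp only [hk0, if_neg, hk1, if_true]
    have hK0 : K - 1 ≠ 0 := by omega
    simp only [hK0, if_false, Set.mem_Ioi]
    generalize q (K - 1) = a
    have e : ∀ i ω, (if a < T ω i then (1:ℝ) else 0) = 1 - (if T ω i ≤ a then (1:ℝ) else 0) := by
      intro i ω
      by_cases h : T ω i ≤ a
      · simp [h, not_lt.2 h]
      · simp [h, not_le.1 h]
    simp only [e]
    have e3 : ∀ ω, (1 - (if T ω i ≤ a then (1:ℝ) else 0)) * (1 - (if T ω j ≤ a then (1:ℝ) else 0))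
       = (1 - (if T ω i ≤ a then (1:ℝ) else 0)) - ((if T ω j ≤ a then (1:ℝ) else 0)
        - (if T ω i ≤ a then (1:ℝ) else 0) * (if T ω j ≤ a then (1:ℝ) else 0)) := fun ω => by ring
    simp only [e3]
    have hc1 := integrable_const (μ := (volume : Measure Ω)) (1:ℝ)
    rw [integral_sub (hc1.sub' (hInt i a)) ((hInt j a).sub' (hInt2 i a j a)),
      integral_sub (hInt j a) (hInt2 i a j a), integral_sub hc1 (hInt i a),
      integral_sub hc1 (hInt j a), hEE, hE, hE]
    simp
    ring
  · simp only [hk0, hk1, if_false, Set.mem_Ioc]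
    have hkK := k.isLt
    have hle : q k.val ≤ q (k.val + 1) := by
      by_contra hlt
      have h1 := hq k.val (by omega) hkK
      have h2 := hq (k.val + 1) (by omega) (by omega)
      have hmono : stdGaussianCDF (q (k.val + 1)) ≤ stdGaussianCDF (q k.val) :=
        measureReal_mono (Set.Iic_subset_Iic.2 (not_le.1 hlt).le)
      rw [h1, h2] at hmono
      have hKp : (0:ℝ) < K := by exact_mod_cast (by omega : 0 < K)
      rw [div_le_div_iff_of_pos_right hKp] at hmono
      push_cast at hmono
      linarith
    generalize q k.val = a at *
    generalize q (k.val + 1) = b at *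
    have e : ∀ i ω, (if a < T ω i ∧ T ω i ≤ b then (1:ℝ) else 0)
        = (if T ω i ≤ b then (1:ℝ) else 0) - (if T ω i ≤ a then (1:ℝ) else 0) := by
      intro i ω
      by_cases h : T ω i ≤ a
      · simp [h, not_lt.2 h, h.trans hle]
      · simp [h, not_le.1 h]
    simp only [e]
    have e3 : ∀ ω, ((if T ω i ≤ b then (1:ℝ) else 0) - (if T ω i ≤ a then (1:ℝ) else 0)) *
        ((if T ω j ≤ b then (1:ℝ) else 0) - (if T ω j ≤ a then (1:ℝ) else 0))
       = ((if T ω i ≤ b then (1:ℝ) else 0) * (if T ω j ≤ b then (1:ℝ) else 0)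
         - (if T ω i ≤ b then (1:ℝ) else 0) * (if T ω j ≤ a then (1:ℝ) else 0))
         - ((if T ω i ≤ a then (1:ℝ) else 0) * (if T ω j ≤ b then (1:ℝ) else 0)
         - (if T ω i ≤ a then (1:ℝ) else 0) * (if T ω j ≤ a then (1:ℝ) else 0)) :=
      fun ω => by ring
    simp only [e3]
    rw [integral_sub ((hInt2 i b j b).sub' (hInt2 i b j a)) ((hInt2 i a j b).sub' (hInt2 i a j a)),
      integral_sub (hInt2 i b j b) (hInt2 i b j a), integral_sub (hInt2 i a j b) (hInt2 i a j a),
      integral_sub (hInt i b) (hInt i a), integral_sub (hInt j b) (hInt j a)]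
    simp only [hEE, hE]
    simp only [hsymm b a]
    ring

end
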